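/- Let ρ be a sublinear operator on 𝒳 that is continuous from above. Then for every linear functional L : 𝒳 → ℝ dominated by ρ, there exists a countably additive probability measure P on (Ω, F) such that L(X) = ∫ X dP for all X ∈ 𝒳. -/

import Mathlib

open MeasureTheory Filter Topology
open scoped ENNReal

/-- `X` belongs to the space `𝒳` of bounded measurable real-valued functions on `Ω`. -/
def MemX {Ω : Type*} [MeasurableSpace Ω] (X : Ω → ℝ) : Prop :=
  Measurable X ∧ ∃ M : ℝ, ∀ ω, |X ω| ≤ M

/-- A sublinear operator on `𝒳`: monotone, constant preserving, subadditive and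
positively homogeneous. -/
def IsSublinearOp {Ω : Type*} [MeasurableSpace Ω] (ρ : (Ω → ℝ) → ℝ) : Prop :=
  (∀ X Y : Ω → ℝ, MemX X → MemX Y → (∀ ω, Y ω ≤ X ω) → ρ Y ≤ ρ X) ∧
  (∀ c : ℝ, ρ (fun _ => c) = c) ∧
  (∀ X Y : Ω → ℝ, MemX X → MemX Y → ρ (X + Y) ≤ ρ X + ρ Y) ∧
  (∀ c : ℝ, 0 ≤ c → ∀ X : Ω → ℝ, MemX X → ρ (c • X) = c * ρ X)

/-- A linear functional on `𝒳`. -/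
def IsLinearOp {Ω : Type*} [MeasurableSpace Ω] (L : (Ω → ℝ) → ℝ) : Prop :=
  (∀ X Y : Ω → ℝ, MemX X → MemX Y → L (X + Y) = L X + L Y) ∧
  (∀ (c : ℝ) (X : Ω → ℝ), MemX X → L (c • X) = c * L X)

/-- `L` is dominated by `ρ` on `𝒳`. -/
def Dominated {Ω : Type*} [MeasurableSpace Ω] (L ρ : (Ω → ℝ) → ℝ) : Prop :=
  ∀ X : Ω → ℝ, MemX X → L X ≤ ρ X

/-- The conjugate operator `E_ῡ[X] := -E_υ[-X]`. -/
def conjOp {Ω : Type*} (ρ : (Ω → ℝ) → ℝ) : (Ω → ℝ) → ℝ := fun X => -ρ (-X)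

/-- The set `𝒳_α` of test functions at significance level `α`. -/
def testSet {Ω : Type*} [MeasurableSpace Ω] (Emu : (Ω → ℝ) → ℝ) (α : ℝ) : Set (Ω → ℝ) :=
  {X | MemX X ∧ (∀ ω, 0 ≤ X ω ∧ X ω ≤ 1) ∧ Emu X ≤ α}

/-- A sublinear operator `ρ` on `𝒳` is continuous from above: `ρ(X_n) ↓ 0` whenever
`X_n ∈ 𝒳` and `X_n ↓ 0` pointwise. -/
def ContFromAbove {Ω : Type*} [MeasurableSpace Ω] (ρ : (Ω → ℝ) → ℝ) : Prop :=
  ∀ X : ℕ → Ω → ℝ, (∀ n, MemX (X n)) → (∀ ω, Antitone fun n => X n ω) →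
    (∀ ω, Tendsto (fun n => X n ω) atTop (𝓝 0)) →
    Tendsto (fun n => ρ (X n)) atTop (𝓝 0)

lemma MemX.add' {Ω : Type*} [MeasurableSpace Ω] {X Y : Ω → ℝ} (hX : MemX X) (hY : MemX Y) :
    MemX (X + Y) := by
  obtain ⟨h1, M, hM⟩ := hX
  obtain ⟨h2, N, hN⟩ := hY
  exact ⟨h1.add h2, M + N, fun ω => (abs_add_le _ _).trans (add_le_add (hM ω) (hN ω))⟩

lemma MemX.smul' {Ω : Type*} [MeasurableSpace Ω] {X : Ω → ℝ} (c : ℝ) (hX : MemX X) :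
    MemX (c • X) := by
  obtain ⟨h1, M, hM⟩ := hX
  refine ⟨h1.const_smul c, |c| * M, fun ω => ?_⟩
  simp only [Pi.smul_apply, smul_eq_mul, abs_mul]
  exact mul_le_mul_of_nonneg_left (hM ω) (abs_nonneg c)

lemma memX_const {Ω : Type*} [MeasurableSpace Ω] (c : ℝ) : MemX (fun _ : Ω => c) :=
  ⟨measurable_const, |c|, fun _ => le_rfl⟩

lemma memX_ind {Ω : Type*} [MeasurableSpace Ω] {A : Set Ω} (hA : MeasurableSet A) :
    MemX (A.indicator (fun _ : Ω => (1 : ℝ))) := by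
  classical
  refine ⟨measurable_const.indicator hA, 1, fun ω => ?_⟩
  by_cases h : ω ∈ A <;> simp [h]

lemma memX_simple {Ω : Type*} [MeasurableSpace Ω] (f : SimpleFunc Ω ℝ) : MemX (f : Ω → ℝ) := by
  refine ⟨f.measurable, ?_⟩
  obtain ⟨M, hM⟩ := f.exists_forall_norm_le
  exact ⟨M, hM⟩

lemma MemX.integrable' {Ω : Type*} [MeasurableSpace Ω] {X : Ω → ℝ} (hX : MemX X)
    (P : Measure Ω) [IsFiniteMeasure P] : Integrable X P := by
  obtain ⟨h1, M, hM⟩ := hX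
  exact Integrable.of_bound h1.aestronglyMeasurable M (Eventually.of_forall hM)

lemma IsLinearOp.sub' {Ω : Type*} [MeasurableSpace Ω] {L : (Ω → ℝ) → ℝ} (hL : IsLinearOp L)
    {X Y : Ω → ℝ} (hX : MemX X) (hY : MemX Y) : L (X - Y) = L X - L Y := by
  have : X - Y = X + (-1 : ℝ) • Y := by ext; simp; ring
  rw [this, hL.1 _ _ hX (hY.smul' _), hL.2 _ _ hY]; ring

lemma MemX.sub' {Ω : Type*} [MeasurableSpace Ω] {X Y : Ω → ℝ} (hX : MemX X) (hY : MemX Y) :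
    MemX (X - Y) := by
  have : X - Y = X + (-1 : ℝ) • Y := by ext; simp; ring
  rw [this]; exact hX.add' (hY.smul' _)

lemma L_zero {Ω : Type*} [MeasurableSpace Ω] {L : (Ω → ℝ) → ℝ} (hL : IsLinearOp L) :
    L 0 = 0 := by
  have := hL.2 0 (fun _ => 0) (memX_const 0)
  simpa using this

lemma memX_sum_ind {Ω : Type*} [MeasurableSpace Ω] {f : ℕ → Set Ω}
    (hf : ∀ i, MeasurableSet (f i)) (n : ℕ) :
    MemX (∑ i ∈ Finset.range n, (f i).indicator (fun _ : Ω => (1 : ℝ))) := by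
  induction n with
  | zero => rw [Finset.range_zero, Finset.sum_empty]; exact memX_const (Ω := Ω) 0
  | succ n ih => rw [Finset.sum_range_succ]; exact ih.add' (memX_ind (hf n))

lemma L_sum_ind {Ω : Type*} [MeasurableSpace Ω] {L : (Ω → ℝ) → ℝ} (hL : IsLinearOp L)
    {f : ℕ → Set Ω} (hf : ∀ i, MeasurableSet (f i)) (n : ℕ) :
    L (∑ i ∈ Finset.range n, (f i).indicator (fun _ : Ω => (1 : ℝ))) =
      ∑ i ∈ Finset.range n, L ((f i).indicator (fun _ : Ω => (1 : ℝ))) := by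
  induction n with
  | zero => simpa using L_zero hL
  | succ n ih =>
    rw [Finset.sum_range_succ, Finset.sum_range_succ, hL.1 _ _ (memX_sum_ind hf n) (memX_ind (hf n)),
      ih]

lemma sum_ind_eq {Ω : Type*} {f : ℕ → Set Ω} (hd : Pairwise (Function.onFun Disjoint f))
    {ω : Ω} {j : ℕ} (hj : ω ∈ f j) (n : ℕ) :
    (∑ i ∈ Finset.range n, (f i).indicator (fun _ : Ω => (1 : ℝ)) ω) = if j < n then 1 else 0 := by
  classical
  have : ∀ i, (f i).indicator (fun _ : Ω => (1 : ℝ)) ω = if j = i then 1 else 0 := by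
    intro i
    split_ifs with h
    · subst h; simp [hj]
    · exact Set.indicator_of_notMem (fun h' => Set.disjoint_left.1 (hd h) hj h') _
  simp [this]

/-- Lemma 4.?: if a sublinear operator `ρ` on `𝒳` is continuous from above, any
linear functional dominated by `ρ` is represented by a countably additive
probability measure. -/
theorem dominated_linear_is_probability {Ω : Type*} [MeasurableSpace Ω]
    (ρ : (Ω → ℝ) → ℝ) (hρ : IsSublinearOp ρ) (hcont : ContFromAbove ρ)
    (L : (Ω → ℝ) → ℝ) (hL : IsLinearOp L) (hdom : Dominated L ρ) :
    ∃ P : Measure Ω, IsProbabilityMeasure P ∧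
      ∀ X : Ω → ℝ, MemX X → L X = ∫ ω, X ω ∂P := by
  classical
  have hpos : ∀ X : Ω → ℝ, MemX X → (∀ ω, 0 ≤ X ω) → 0 ≤ L X := by
    intro X hX h0
    have h1 := hdom _ (hX.smul' (-1))
    have h2 := hρ.1 (fun _ => 0) _ (memX_const 0) (hX.smul' (-1)) (by intro ω; simpa using h0 ω)
    rw [hρ.2.1] at h2
    rw [hL.2 _ _ hX] at h1
    linarith
  have hone : L (fun _ => 1) = 1 := by
    have h1 := hdom _ (memX_const 1)
    have h2 := hdom _ ((memX_const 1).smul' (-1))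
    rw [hL.2 _ _ (memX_const 1)] at h2
    have : ((-1 : ℝ) • fun _ : Ω => (1 : ℝ)) = fun _ => -1 := by ext; simp
    rw [this, hρ.2.1] at h2
    rw [hρ.2.1] at h1
    linarith
  have hLc : ∀ X : ℕ → Ω → ℝ, (∀ n, MemX (X n)) → (∀ ω, Antitone fun n => X n ω) →
      (∀ ω, Tendsto (fun n => X n ω) atTop (𝓝 0)) → (∀ n ω, 0 ≤ X n ω) →
      Tendsto (fun n => L (X n)) atTop (𝓝 0) := by
    intro X hX ha ht h0
    exact squeeze_zero (fun n => hpos _ (hX n) (h0 n)) (fun n => hdom _ (hX n)) (hcont X hX ha ht)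
  have hindpos : ∀ A : Set Ω, MeasurableSet A → 0 ≤ L (A.indicator fun _ => 1) := fun A hA =>
    hpos _ (memX_ind hA) (fun ω => Set.indicator_nonneg (fun _ _ => zero_le_one) ω)
  have hsum : ∀ f : ℕ → Set Ω, (∀ i, MeasurableSet (f i)) → Pairwise (Function.onFun Disjoint f) →
      HasSum (fun i => L ((f i).indicator fun _ => 1)) (L ((⋃ i, f i).indicator fun _ => 1)) := by
    intro f hf hd
    have hU : MemX ((⋃ i, f i).indicator fun _ : Ω => (1 : ℝ)) := memX_ind (MeasurableSet.iUnion hf)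
    rw [hasSum_iff_tendsto_nat_of_nonneg (fun i => hindpos _ (hf i))]
    have key : ∀ (n : ℕ) (ω : Ω), (((⋃ i, f i).indicator fun _ : Ω => (1 : ℝ)) -
        ∑ i ∈ Finset.range n, (f i).indicator (fun _ : Ω => (1 : ℝ))) ω =
        1 - (if ω ∈ ⋃ i, f i then (if ∃ j < n, ω ∈ f j then 1 else 0) else 1) := by
      intro n ω
      by_cases h : ω ∈ ⋃ i, f i
      · obtain ⟨j, hj⟩ := Set.mem_iUnion.1 h
        have h2 : (∃ k < n, ω ∈ f k) ↔ j < n := by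
          constructor
          · rintro ⟨k, hk, hk'⟩
            have : j = k := by
              by_contra hne
              exact Set.disjoint_left.1 (hd hne) hj hk'
            omega
          · exact fun h => ⟨j, h, hj⟩
        rw [Pi.sub_apply, Finset.sum_apply, sum_ind_eq hd hj, Set.indicator_of_mem h, if_pos h]
        simp only [h2]
      · have h3 : ∀ i, ω ∉ f i := fun i hi => h (Set.mem_iUnion.2 ⟨i, hi⟩)
        rw [Pi.sub_apply, Finset.sum_apply, Set.indicator_of_notMem h, if_neg h]
        simp [h3]
    have := hLc (fun n => ((⋃ i, f i).indicator fun _ : Ω => (1 : ℝ)) -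
        ∑ i ∈ Finset.range n, (f i).indicator (fun _ : Ω => (1 : ℝ)))
        (fun n => hU.sub' (memX_sum_ind hf n)) ?_ ?_ ?_
    · have h4 := this.const_sub (L ((⋃ i, f i).indicator fun _ => 1))
      simp only [sub_zero] at h4
      refine h4.congr fun n => ?_
      rw [hL.sub' hU (memX_sum_ind hf n), L_sum_ind hL hf]
      ring
    · intro ω m n hmn
      simp only [Pi.sub_apply, Finset.sum_apply]
      refine sub_le_sub_left (Finset.sum_le_sum_of_subset_of_nonneg
        (Finset.range_mono hmn) ?_) _
      intro i _ _
      exact Set.indicator_nonneg (fun _ _ => zero_le_one) ω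
    · intro ω
      simp only [key]
      by_cases h : ω ∈ ⋃ i, f i
      · obtain ⟨j, hj⟩ := Set.mem_iUnion.1 h
        refine tendsto_const_nhds.congr' ?_
        filter_upwards [eventually_gt_atTop j] with n hn
        rw [if_pos h, if_pos ⟨j, hn, hj⟩, sub_self]
      · simp [h]
    · intro n ω
      simp only [key]
      split_ifs <;> norm_num
  let P : Measure Ω := Measure.ofMeasurable
    (fun A _ => ENNReal.ofReal (L (A.indicator fun _ => 1)))
    (by
      have h : L (fun _ => 0) = 0 := L_zero hL
      simp only [Set.indicator_empty]
      rw [h, ENNReal.ofReal_zero])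
    (by
      intro f hf hd
      have h := hsum f hf hd
      rw [← h.tsum_eq, ENNReal.ofReal_tsum_of_nonneg (fun i => hindpos _ (hf i)) h.summable])
  have hP : ∀ A, MeasurableSet A → P A = ENNReal.ofReal (L (A.indicator fun _ => 1)) :=
    fun A hA => Measure.ofMeasurable_apply A hA
  have hprob : IsProbabilityMeasure P := ⟨by
    rw [hP _ MeasurableSet.univ, Set.indicator_univ, hone, ENNReal.ofReal_one]⟩
  refine ⟨P, hprob, ?_⟩
  have hind : ∀ A, MeasurableSet A →
      L (A.indicator fun _ => 1) = ∫ ω, A.indicator (fun _ => (1 : ℝ)) ω ∂P := by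
    intro A hA
    rw [integral_indicator hA]
    simp [Measure.real, hP A hA, ENNReal.toReal_ofReal (hindpos A hA)]
  have hsimple : ∀ f : SimpleFunc Ω ℝ, L f = ∫ ω, f ω ∂P := by
    intro f
    induction f using SimpleFunc.induction with
    | const c hs =>
      rename_i s
      have : ((SimpleFunc.piecewise s hs (SimpleFunc.const Ω c) (SimpleFunc.const Ω 0) :
          SimpleFunc Ω ℝ) : Ω → ℝ) = c • (s.indicator fun _ => (1 : ℝ)) := by
        classical
        ext ω
        by_cases h : ω ∈ s <;> simp [h]
      rw [this, hL.2 _ _ (memX_ind hs), hind s hs, ← integral_const_mul]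
      rfl
    | add hd hf hg =>
      rename_i f g
      rw [SimpleFunc.coe_add, hL.1 _ _ (memX_simple f) (memX_simple g), hf, hg]
      exact (integral_add ((memX_simple f).integrable' P) ((memX_simple g).integrable' P)).symm
  intro X hX
  have happ : ∀ ε : ℝ, 0 < ε → |L X - ∫ ω, X ω ∂P| ≤ ε := by
    intro ε hε
    have hm : Measurable (fun ω => ⌊X ω / ε⌋) := (hX.1.div_const ε).floor
    obtain ⟨M, hM⟩ := hX.2
    have hfin : (Set.range fun ω => (⌊X ω / ε⌋ : ℤ)).Finite := by
      refine (Set.finite_Icc ⌊(-M) / ε⌋ ⌊M / ε⌋).subset ?_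
      rintro _ ⟨ω, rfl⟩
      have := abs_le.1 (hM ω)
      exact ⟨Int.floor_mono (by gcongr; exact this.1), Int.floor_mono (by gcongr; exact this.2)⟩
    let g : SimpleFunc Ω ℤ := ⟨fun ω => ⌊X ω / ε⌋, fun x => hm (measurableSet_singleton x), hfin⟩
    let f : SimpleFunc Ω ℝ := g.map (fun k : ℤ => (k : ℝ) * ε)
    have hfω : ∀ ω, f ω = (⌊X ω / ε⌋ : ℝ) * ε := fun ω => rfl
    have hl : ∀ ω, 0 ≤ (X - f) ω := by
      intro ω
      have := (le_div_iff₀ hε).1 (Int.floor_le (X ω / ε))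
      simp only [Pi.sub_apply, hfω]; linarith
    have hu : ∀ ω, (X - f) ω ≤ ε := by
      intro ω
      have := (div_lt_iff₀ hε).1 (Int.lt_floor_add_one (X ω / ε))
      simp only [Pi.sub_apply, hfω]; linarith
    have hXf := hX.sub' (memX_simple f)
    have a1 := hpos _ hXf hl
    have a2 : L (X - f) ≤ ε := by
      have := hdom _ hXf
      have h2 := hρ.1 (fun _ => ε) _ (memX_const ε) hXf hu
      rw [hρ.2.1] at h2
      linarith
    have b1 : 0 ≤ ∫ ω, (X - f) ω ∂P := integral_nonneg hl
    have b2 : ∫ ω, (X - f) ω ∂P ≤ ε := by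
      have := integral_mono (hXf.integrable' P) (integrable_const ε) hu
      simpa using this
    rw [hL.sub' hX (memX_simple f), hsimple f] at a1 a2
    rw [integral_sub' (hX.integrable' P) ((memX_simple f).integrable' P)] at b1 b2
    rw [abs_le]
    constructor <;> linarith
  have h0 : |L X - ∫ ω, X ω ∂P| ≤ 0 := le_of_forall_pos_le_add (by simpa using happ)
  exact sub_eq_zero.1 (abs_nonpos_iff.1 h0)
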